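/- Let h₂ be the unique real t ≥ 0 satisfying ∫₁^∞ [P(s) − (P(s)² + P(2s))/2] e^{(1−s)t} ds = 0. Then for every real h ≥ 0, f(N₁, h) < f(N₂, h) if and only if h > h₂. -/

import Mathlib

open MeasureTheory Real

/-- The prime zeta function `P(s) = ∑_p p^{-s}` (sum over all primes). -/
noncomputable def primeZeta (s : ℝ) : ℝ := ∑' p : Nat.Primes, (p.1 : ℝ) ^ (-s)

/-- The set of `k`-almost primes: positive integers with exactly `k` prime
factors counted with multiplicity. -/
def almostPrimes (k : ℕ) : Set ℕ := {n | 0 < n ∧ n.primeFactorsList.length = k}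

/-- `P_k(s) = ∑_{n ∈ N_k} n^{-s}`; note `P_0(s) = 1` since `N_0 = {1}`. -/
noncomputable def Pk (k : ℕ) (s : ℝ) : ℝ := ∑' n : almostPrimes k, (n.1 : ℝ) ^ (-s)

/-- Translated sum `f(A, h) = ∑_{a ∈ A} 1/(a (log a + h))`. -/
noncomputable def transSum (A : Set ℕ) (h : ℝ) : ℝ :=
  ∑' a : A, 1 / ((a.1 : ℝ) * (Real.log a.1 + h))

lemma pz_summable {s : ℝ} (hs : 1 < s) : Summable (fun p : Nat.Primes => (p.1 : ℝ) ^ (-s)) :=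
  Nat.Primes.summable_rpow.mpr (by linarith)

lemma pz_pos {s : ℝ} (hs : 1 < s) : 0 < primeZeta s := by
  refine (pz_summable hs).tsum_pos (fun p => by positivity) ⟨2, Nat.prime_two⟩ ?_
  norm_num
  positivity

lemma one_lt_prime (p : Nat.Primes) : (1:ℝ) < p.1 := by
  exact_mod_cast p.2.one_lt

lemma pz_strictAnti : StrictAntiOn primeZeta (Set.Ioi 1) := by
  intro s hs t ht hst
  refine Summable.tsum_lt_tsum (i := ⟨2, Nat.prime_two⟩) ?_ ?_ (pz_summable ht) (pz_summable hs)
  · intro p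
    exact Real.rpow_le_rpow_of_exponent_le (one_lt_prime p).le (by linarith)
  · exact Real.rpow_lt_rpow_of_exponent_lt (one_lt_prime _) (by linarith)

lemma pz_two_mul_le {s : ℝ} (hs : 1 < s) : primeZeta (2 * s) ≤ primeZeta s ^ 2 := by
  have h := pz_summable hs
  have : primeZeta (2 * s) ≤ ∑' p : Nat.Primes, (p.1 : ℝ) ^ (-s) * primeZeta s := by
    refine Summable.tsum_le_tsum ?_ (pz_summable (by linarith)) (h.mul_right _)
    intro p
    have hp : (0:ℝ) < p.1 := by linarith [one_lt_prime p]
    have : (p.1 : ℝ) ^ (-(2 * s)) = (p.1 : ℝ) ^ (-s) * (p.1 : ℝ) ^ (-s) := by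
      rw [← Real.rpow_add hp]; ring_nf
    rw [this]
    gcongr
    exact h.le_tsum p (fun q _ => by positivity)
  rw [tsum_mul_right] at this
  rw [sq]; exact this

lemma pz_large {s : ℝ} (hs : 2 ≤ s) :
    primeZeta s ≤ 4 * primeZeta 2 * Real.exp (-Real.log 2 * s) := by
  have e : (4:ℝ) * primeZeta 2 * Real.exp (-Real.log 2 * s) = ∑' p : Nat.Primes, (p.1 : ℝ) ^ (-2 : ℝ) * (2:ℝ) ^ (2 - s) := by
    rw [tsum_mul_right, Real.rpow_sub (by norm_num), Real.rpow_def_of_pos (by norm_num : (0:ℝ) < 2) s, neg_mul, Real.exp_neg, primeZeta]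
    norm_num
    ring
  rw [e]
  refine Summable.tsum_le_tsum ?_ (pz_summable (by linarith)) ((pz_summable (by norm_num)).mul_right _)
  intro p
  have hp : (0:ℝ) < p.1 := by linarith [one_lt_prime p]
  have h2 : (2:ℝ) ≤ p.1 := by exact_mod_cast p.2.two_le
  have : (p.1 : ℝ) ^ (-s) = (p.1 : ℝ) ^ (-2 : ℝ) * (p.1 : ℝ) ^ (2 - s) := by
    rw [← Real.rpow_add hp]; ring_nf
  rw [this]
  exact mul_le_mul_of_nonneg_left
    (Real.rpow_le_rpow_of_nonpos (by norm_num) h2 (by linarith)) (by positivity)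

lemma exp_pz_le {s : ℝ} (hs : 1 < s) : Real.exp (primeZeta s) ≤ s / (s - 1) := by
  let f : ℕ →*₀ ℝ :=
    { toFun := fun n => (n : ℝ) ^ (-s)
      map_zero' := by simp [Real.zero_rpow (by linarith : -s ≠ 0)]
      map_one' := by simp
      map_mul' := fun a b => by
        push_cast
        exact Real.mul_rpow (by positivity) (by positivity) }
  have hf : ∀ n : ℕ, f n = (n : ℝ) ^ (-s) := fun n => rfl
  have hsum : Summable (fun n => f n) := by
    simp only [hf]
    exact Real.summable_nat_rpow.mpr (by linarith)
  have hprod := EulerProduct.eulerProduct_completely_multiplicative_hasProd (f := f)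
    (by simpa using hsum.norm)
  have hexp : Filter.Tendsto (fun S : Finset Nat.Primes => Real.exp (∑ p ∈ S, (p.1 : ℝ) ^ (-s)))
      Filter.atTop (nhds (Real.exp (primeZeta s))) :=
    (Real.continuous_exp.tendsto _).comp (pz_summable hs).hasSum
  have h1 : Real.exp (primeZeta s) ≤ ∑' n, f n := by
    refine le_of_tendsto_of_tendsto' hexp hprod ?_
    intro S
    rw [Real.exp_sum]
    refine Finset.prod_le_prod (fun i _ => (Real.exp_pos _).le) ?_
    intro p _
    have hlt : (p.1 : ℝ) ^ (-s) < 1 := Real.rpow_lt_one_of_one_lt_of_neg (one_lt_prime p) (by linarith)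
    rw [hf, ← inv_inv (Real.exp _), ← Real.exp_neg]
    apply inv_anti₀ (by linarith)
    exact Real.one_sub_le_exp_neg _
  have h2 : ∑' n, f n = ∑' n : ℕ, 1 / (n + 1 : ℝ) ^ s := by
    rw [hsum.tsum_eq_zero_add]
    simp only [map_zero, zero_add]
    refine tsum_congr fun n => ?_
    rw [hf, Real.rpow_neg (by positivity)]
    push_cast
    simp
  have h3 := ZetaAsymptotics.zeta_limit_aux1 hs
  have h4 : 0 ≤ ZetaAsymptotics.termTSum s := tsum_nonneg fun n => ZetaAsymptotics.term_nonneg _ _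
  have h5 : s / (s - 1) = 1 + 1 / (s - 1) := by
    have : s - 1 ≠ 0 := by linarith
    field_simp; ring
  rw [h5]
  have : 0 ≤ s * ZetaAsymptotics.termTSum s := by positivity
  linarith

lemma pz_aem : AEStronglyMeasurable primeZeta (volume.restrict (Set.Ioi 1)) :=
  (aemeasurable_restrict_of_antitoneOn measurableSet_Ioi pz_strictAnti.antitoneOn).aestronglyMeasurable

lemma pz_sq_small {s : ℝ} (hs : 1 < s) (h2 : s ≤ 2) :
    primeZeta s ^ 2 ≤ 18 * (s - 1) ^ (-(2/3) : ℝ) := by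
  have hp := pz_pos hs
  have h0 : 0 < s - 1 := by linarith
  have h1 : primeZeta s / 3 ≤ Real.exp (primeZeta s / 3) := by
    linarith [Real.add_one_le_exp (primeZeta s / 3)]
  have e : Real.exp (primeZeta s / 3) ^ 2 = Real.exp (primeZeta s) ^ (2/3 : ℝ) := by
    rw [← Real.exp_mul, ← Real.exp_nat_mul]; congr 1; push_cast; ring
  have h3 : Real.exp (primeZeta s) ^ (2/3 : ℝ) ≤ (2 / (s - 1)) ^ (2/3 : ℝ) := by
    gcongr
    refine (exp_pz_le hs).trans ?_
    gcongr
  have h4 : (2:ℝ) ^ (2/3 : ℝ) ≤ 2 := by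
    conv_rhs => rw [← Real.rpow_one 2]
    exact Real.rpow_le_rpow_of_exponent_le (by norm_num) (by norm_num)
  rw [Real.div_rpow (by norm_num) h0.le, div_eq_mul_inv ((2:ℝ) ^ (2/3 : ℝ)), ← Real.rpow_neg h0.le] at h3
  have h5 : (primeZeta s / 3) ^ 2 ≤ Real.exp (primeZeta s / 3) ^ 2 := by gcongr
  have h6 : (0:ℝ) ≤ (s - 1) ^ (-(2/3) : ℝ) := by positivity
  nlinarith

lemma pz_sq_int : IntegrableOn (fun s => primeZeta s ^ 2) (Set.Ioi 1) := by
  rw [← Set.Ioc_union_Ioi_eq_Ioi (show (1:ℝ) ≤ 2 by norm_num)]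
  refine IntegrableOn.union ?_ ?_
  · have h := ((intervalIntegral.intervalIntegrable_rpow' (a := 0) (b := 1) (r := -(2/3)) (by norm_num)).comp_sub_right 1).const_mul 18
    norm_num at h
    rw [intervalIntegrable_iff_integrableOn_Ioc_of_le (by norm_num)] at h
    refine Integrable.mono' h ((pz_aem.mono_measure (Measure.restrict_mono Set.Ioc_subset_Ioi_self le_rfl)).pow 2) ?_
    refine (ae_restrict_iff' measurableSet_Ioc).mpr (Filter.Eventually.of_forall fun s hs => ?_)
    rw [Real.norm_of_nonneg (sq_nonneg _)]
    have := pz_sq_small hs.1 hs.2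
    simpa [neg_div] using this
  · have h := ((integrableOn_exp_mul_Ioi (a := -Real.log 2) (by simp [Real.log_pos]) 2).const_mul (4 * primeZeta 2)).const_mul (primeZeta 2)
    refine Integrable.mono' h ((pz_aem.mono_measure (Measure.restrict_mono (Set.Ioi_subset_Ioi (by norm_num)) le_rfl)).pow 2) ?_
    refine (ae_restrict_iff' measurableSet_Ioi).mpr (Filter.Eventually.of_forall fun s hs => ?_)
    rw [Real.norm_of_nonneg (sq_nonneg _), sq]
    have hs' : (2:ℝ) < s := hs
    have h1 := pz_large hs'.le
    have h2 := pz_strictAnti (show (2:ℝ) ∈ Set.Ioi 1 by norm_num) (show s ∈ Set.Ioi (1:ℝ) by simp; linarith) hs'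
    have h3 := pz_pos (show 1 < s by linarith)
    exact mul_le_mul h2.le h1 h3.le (pz_pos (by norm_num)).le

lemma pz_int : IntegrableOn primeZeta (Set.Ioi 1) := by
  have hsq := pz_sq_int
  rw [← Set.Ioc_union_Ioi_eq_Ioi (show (1:ℝ) ≤ 2 by norm_num)] at hsq ⊢
  refine IntegrableOn.union ?_ ?_
  · have h : IntegrableOn (fun s => primeZeta s ^ 2 + 1) (Set.Ioc 1 2) :=
      (hsq.mono_set Set.subset_union_left).add (integrableOn_const (by simp))
    refine Integrable.mono' h ((pz_aem.mono_measure (Measure.restrict_mono Set.Ioc_subset_Ioi_self le_rfl))) ?_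
    refine (ae_restrict_iff' measurableSet_Ioc).mpr (Filter.Eventually.of_forall fun s hs => ?_)
    rw [Real.norm_of_nonneg (pz_pos hs.1).le]
    nlinarith [sq_nonneg (primeZeta s - 1), pz_pos hs.1]
  · have h := ((integrableOn_exp_mul_Ioi (a := -Real.log 2) (by simp [Real.log_pos]) 2).const_mul (4 * primeZeta 2))
    refine Integrable.mono' h ((pz_aem.mono_measure (Measure.restrict_mono (Set.Ioi_subset_Ioi (by norm_num)) le_rfl))) ?_
    refine (ae_restrict_iff' measurableSet_Ioi).mpr (Filter.Eventually.of_forall fun s hs => ?_)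
    have hs' : (2:ℝ) < s := hs
    rw [Real.norm_of_nonneg (pz_pos (by linarith)).le]
    exact pz_large hs'.le

lemma pz2_int : IntegrableOn (fun s => primeZeta (2 * s)) (Set.Ioi 1) := by
  refine Integrable.mono' pz_sq_int ?_ ?_
  · refine (aemeasurable_restrict_of_antitoneOn measurableSet_Ioi ?_).aestronglyMeasurable
    intro s hs t ht hst
    simp only [Set.mem_Ioi] at hs ht
    exact pz_strictAnti.antitoneOn (by simp; linarith) (by simp; linarith) (by linarith)
  · refine (ae_restrict_iff' measurableSet_Ioi).mpr (Filter.Eventually.of_forall fun s hs => ?_)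
    have hs' : (1:ℝ) < s := hs
    rw [Real.norm_of_nonneg (pz_pos (by linarith)).le]
    exact pz_two_mul_le hs'

lemma mul_exp_int {F : ℝ → ℝ} (hF : IntegrableOn F (Set.Ioi 1)) {h : ℝ} (hh : 0 ≤ h) :
    IntegrableOn (fun s => F s * Real.exp ((1 - s) * h)) (Set.Ioi 1) := by
  refine Integrable.mono hF (hF.aestronglyMeasurable.mul (by fun_prop)) ?_
  refine (ae_restrict_iff' measurableSet_Ioi).mpr (Filter.Eventually.of_forall fun s hs => ?_)
  have hs' : (1:ℝ) < s := hs
  rw [norm_mul, Real.norm_of_nonneg (Real.exp_pos _).le]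
  refine mul_le_of_le_one_right (norm_nonneg _) ?_
  rw [Real.exp_le_one_iff]
  nlinarith

lemma term_eq {a : ℕ} (ha : 2 ≤ a) (h s : ℝ) :
    (a : ℝ) ^ (-s) * Real.exp ((1 - s) * h) = Real.exp h * Real.exp (-(Real.log a + h) * s) := by
  have : (0:ℝ) < a := by positivity
  rw [Real.rpow_def_of_pos this, ← Real.exp_add, ← Real.exp_add]
  ring_nf

lemma log_pos' {a : ℕ} (ha : 2 ≤ a) {h : ℝ} (hh : 0 ≤ h) : 0 < Real.log a + h := by
  have : 0 < Real.log a := Real.log_pos (by exact_mod_cast ha)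
  linarith

lemma term_int {a : ℕ} (ha : 2 ≤ a) {h : ℝ} (hh : 0 ≤ h) :
    IntegrableOn (fun s : ℝ => (a : ℝ) ^ (-s) * Real.exp ((1 - s) * h)) (Set.Ioi 1) := by
  simp_rw [term_eq ha]
  exact (integrableOn_exp_mul_Ioi (by linarith [log_pos' ha hh]) 1).const_mul _

lemma term_integral {a : ℕ} (ha : 2 ≤ a) {h : ℝ} (hh : 0 ≤ h) :
    ∫ s in Set.Ioi (1:ℝ), (a : ℝ) ^ (-s) * Real.exp ((1 - s) * h)
      = 1 / ((a : ℝ) * (Real.log a + h)) := by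
  simp_rw [term_eq ha]
  have hl := log_pos' ha hh
  have h0 : (0:ℝ) < a := by positivity
  have e : Real.exp (-(Real.log a + h)) = ((a:ℝ) * Real.exp h)⁻¹ := by
    rw [Real.exp_neg, Real.exp_add, Real.exp_log h0]
  rw [integral_const_mul, integral_exp_mul_Ioi (by linarith), mul_one, e, neg_div_neg_eq]
  have : Real.exp h ≠ 0 := (Real.exp_pos h).ne'
  field_simp

lemma transSum_eq {A : Set ℕ} (hA : ∀ a ∈ A, 2 ≤ a) {Q : ℝ → ℝ} 
    (hQ : ∀ s, 1 < s → HasSum (fun a : A => (a.1 : ℝ) ^ (-s)) (Q s))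
    (hint : IntegrableOn Q (Set.Ioi 1)) {h : ℝ} (hh : 0 ≤ h) :
    transSum A h = ∫ s in Set.Ioi (1:ℝ), Q s * Real.exp ((1 - s) * h) := by
  have hn : ∀ (a : A) (s : ℝ), 0 ≤ (a.1 : ℝ) ^ (-s) * Real.exp ((1 - s) * h) := 
    fun a s => by positivity
  have key : HasSum (fun a : A => ∫ s in Set.Ioi (1:ℝ), (a.1 : ℝ) ^ (-s) * Real.exp ((1 - s) * h))
      (∫ s in Set.Ioi (1:ℝ), ∑' a : A, (a.1 : ℝ) ^ (-s) * Real.exp ((1 - s) * h)) := by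
    refine hasSum_integral_of_summable_integral_norm (fun a => term_int (hA a.1 a.2) hh) ?_
    simp_rw [Real.norm_of_nonneg (hn _ _)]
    refine summable_of_sum_le (c := ∫ s in Set.Ioi (1:ℝ), Q s * Real.exp ((1 - s) * h)) 
      (fun a => integral_nonneg fun s => hn a s) ?_
    intro S
    rw [← integral_finsetSum S (fun (a : A) _ => term_int (hA a.1 a.2) hh)]
    refine setIntegral_mono_on (integrable_finsetSum _ fun (a : A) _ => term_int (hA a.1 a.2) hh)
      (mul_exp_int hint hh) measurableSet_Ioi ?_
    intro s hs
    rw [← Finset.sum_mul]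
    gcongr
    exact sum_le_hasSum S (fun a _ => by positivity) (hQ s hs)
  have e : ∫ s in Set.Ioi (1:ℝ), ∑' a : A, (a.1 : ℝ) ^ (-s) * Real.exp ((1 - s) * h)
      = ∫ s in Set.Ioi (1:ℝ), Q s * Real.exp ((1 - s) * h) := by
    refine setIntegral_congr_fun measurableSet_Ioi fun s hs => ?_
    beta_reduce
    rw [tsum_mul_right, (hQ s hs).tsum_eq]
  rw [← e, ← key.tsum_eq, transSum]
  exact tsum_congr fun a => (term_integral (hA a.1 a.2) hh).symm

lemma two_le_ap {k : ℕ} (hk : k ≠ 0) : ∀ a ∈ almostPrimes k, 2 ≤ a := by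
  rintro a ⟨h0, hl⟩
  by_contra hc
  have : a = 1 := by omega
  subst this
  simp at hl
  exact hk hl.symm

lemma ap_one : almostPrimes 1 = {p | Nat.Prime p} := by
  ext n
  constructor
  · rintro ⟨h0, hl⟩
    obtain ⟨p, hp⟩ := List.length_eq_one_iff.mp hl
    have h1 := Nat.prod_primeFactorsList h0.ne'
    have h2 : Nat.Prime p := Nat.prime_of_mem_primeFactorsList (n := n) (by simp [hp])
    rw [hp] at h1
    simp at h1
    simpa [← h1] using h2
  · intro hp
    have hp' : Nat.Prime n := hp
    exact ⟨hp'.pos, by simp [Nat.primeFactorsList_prime hp']⟩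

lemma hasSum_one {s : ℝ} (hs : 1 < s) :
    HasSum (fun a : almostPrimes 1 => (a.1 : ℝ) ^ (-s)) (primeZeta s) := by
  rw [ap_one]
  exact (pz_summable hs).hasSum

lemma pfl_mul {p q : ℕ} (hp : p.Prime) (hq : q.Prime) (h : p ≤ q) :
    (p * q).primeFactorsList = [p, q] := by
  have h1 : [p, q].Perm (p * q).primeFactorsList :=
    Nat.primeFactorsList_unique (by simp) (by simp [hp, hq])
  refine (h1.eq_of_pairwise' (r := (· ≤ ·)) (by simpa using h) 
    (Nat.primeFactorsList_sorted _).pairwise).symm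

def apMap (x : {x : Nat.Primes × Nat.Primes // x.1.1 ≤ x.2.1}) : almostPrimes 2 :=
  ⟨x.1.1.1 * x.1.2.1, Nat.mul_pos x.1.1.2.pos x.1.2.2.pos, by
    rw [pfl_mul x.1.1.2 x.1.2.2 x.2]; rfl⟩

lemma apMap_bij : Function.Bijective apMap := by
  constructor
  · rintro ⟨⟨⟨p, hp⟩, ⟨q, hq⟩⟩, hpq⟩ ⟨⟨⟨p', hp'⟩, ⟨q', hq'⟩⟩, hpq'⟩ h
    have h1 : p * q = p' * q' := congrArg Subtype.val h
    have h2 := pfl_mul hp hq hpq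
    rw [h1, pfl_mul hp' hq' hpq'] at h2
    simp at h2
    obtain ⟨rfl, rfl⟩ := h2
    rfl
  · rintro ⟨n, h0, hl⟩
    obtain ⟨p, q, hpq⟩ := List.length_eq_two.mp hl
    have h1 := Nat.prod_primeFactorsList h0.ne'
    have h2 : Nat.Prime p := Nat.prime_of_mem_primeFactorsList (n := n) (by simp [hpq])
    have h3 : Nat.Prime q := Nat.prime_of_mem_primeFactorsList (n := n) (by simp [hpq])
    have h4 := (Nat.primeFactorsList_sorted n).pairwise
    rw [hpq] at h1 h4
    simp at h1 h4
    exact ⟨⟨⟨⟨p, h2⟩, ⟨q, h3⟩⟩, h4⟩, Subtype.ext h1⟩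

lemma hasSum_two {s : ℝ} (hs : 1 < s) :
    HasSum (fun a : almostPrimes 2 => (a.1 : ℝ) ^ (-s)) 
      ((primeZeta s ^ 2 + primeZeta (2 * s)) / 2) := by
  classical
  have hP := pz_summable hs
  set g : Nat.Primes × Nat.Primes → ℝ := fun x => (x.1.1 : ℝ) ^ (-s) * (x.2.1 : ℝ) ^ (-s) with hg
  have hgs : Summable g := hP.mul_of_nonneg hP (fun p => by positivity) (fun p => by positivity)
  have hgt : ∑' x, g x = primeZeta s ^ 2 := by
    rw [sq, primeZeta, hP.tsum_mul_tsum hP hgs]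
  let S : Set (Nat.Primes × Nat.Primes) := {x | x.1.1 ≤ x.2.1}
  let T : Set (Nat.Primes × Nat.Primes) := {x | x.2.1 ≤ x.1.1}
  let D : Set (Nat.Primes × Nat.Primes) := {x | x.1.1 = x.2.1}
  have hS : Summable (S.indicator g) := hgs.indicator S
  have hT : Summable (T.indicator g) := hgs.indicator T
  have hD : Summable (D.indicator g) := hgs.indicator D
  have e1 : ∑' x, T.indicator g x = ∑' x, S.indicator g x := by
    rw [← (Equiv.prodComm Nat.Primes Nat.Primes).tsum_eq (S.indicator g)]
    refine tsum_congr fun x => ?_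
    simp only [Set.indicator, S, T, Set.mem_ofPred_eq, Equiv.prodComm_apply, Prod.fst_swap, Prod.snd_swap, hg]
    split_ifs <;> ring
  have e2 : ∑' x, S.indicator g x + ∑' x, T.indicator g x = ∑' x, g x + ∑' x, D.indicator g x := by
    rw [← hS.tsum_add hT, ← hgs.tsum_add hD]
    refine tsum_congr fun x => ?_
    simp only [Set.indicator, S, T, D, Set.mem_ofPred_eq]
    rcases lt_trichotomy x.1.1 x.2.1 with h | h | h
    · simp [h.le, h.not_ge, h.ne]
    · simp [h]
    · simp [h.le, h.not_ge, h.ne']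
  have e3 : ∑' x, D.indicator g x = primeZeta (2 * s) := by
    have hinj : Function.Injective (fun p : Nat.Primes => (p, p)) := fun p q h => (Prod.ext_iff.mp h).1
    rw [← hinj.tsum_eq (f := D.indicator g), primeZeta]
    · refine tsum_congr fun p => ?_
      have hp : (0:ℝ) < p.1 := by linarith [one_lt_prime p]
      simp only [Set.indicator, D, Set.mem_ofPred_eq, if_true, hg]
      rw [← Real.rpow_add hp]; ring_nf
    · intro x hx
      have : x.1.1 = x.2.1 := Set.mem_of_indicator_ne_zero (s := D) hx
      exact ⟨x.1, Prod.ext rfl (Subtype.ext this)⟩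
  have e4 : ∑' x, S.indicator g x = (primeZeta s ^ 2 + primeZeta (2 * s)) / 2 := by
    linarith
  have h5 : HasSum (g ∘ (Subtype.val : S → _)) ((primeZeta s ^ 2 + primeZeta (2 * s)) / 2) := by
    rw [← e4]
    exact (hasSum_subtype_iff_indicator).mpr hS.hasSum
  rw [← (Equiv.ofBijective apMap apMap_bij).hasSum_iff]
  have h6 : HasSum (fun x : {x : Nat.Primes × Nat.Primes // x.1.1 ≤ x.2.1} => g x.1)
      ((primeZeta s ^ 2 + primeZeta (2 * s)) / 2) := h5
  convert h6 using 1
  funext x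
  simp only [Function.comp, Equiv.ofBijective_apply, apMap, hg]
  push_cast
  exact Real.mul_rpow (by positivity) (by positivity)

lemma int_pos {F : ℝ → ℝ} {s0 : ℝ} (hF : IntegrableOn F (Set.Ioi 1))
    (hp : ∀ s, 1 < s → s ≠ s0 → 0 < F s) : 0 < ∫ s in Set.Ioi (1:ℝ), F s := by
  have hne : ∀ᵐ s : ℝ, s ≠ s0 := by
    simp [ae_iff]
  rw [setIntegral_pos_iff_support_of_nonneg_ae ?_ hF]
  · have hsub : Set.Ioi (max 1 s0) ⊆ Function.support F ∩ Set.Ioi 1 := by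
      intro s hs
      have := max_lt_iff.mp (Set.mem_Ioi.mp hs)
      exact ⟨(hp s this.1 this.2.ne').ne', this.1⟩
    refine lt_of_lt_of_le ?_ (measure_mono hsub)
    simp
  · refine (ae_restrict_iff' measurableSet_Ioi).mpr ?_
    filter_upwards [hne] with s h1 h2
    exact (hp s h2 h1).le

/-- the difference -/
noncomputable def DD (s : ℝ) : ℝ := primeZeta s - (primeZeta s ^ 2 + primeZeta (2 * s)) / 2

lemma DD_step {s t : ℝ} (hs : 1 < s) (hst : s < t) (h : 0 ≤ DD s) : 0 < DD t := by
  have hx := pz_pos hs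
  have hy := pz_pos (hs.trans hst)
  have hxy := pz_strictAnti (Set.mem_Ioi.mpr hs) (Set.mem_Ioi.mpr (hs.trans hst)) hst
  have huv := pz_strictAnti (a := 2 * s) (b := 2 * t) (Set.mem_Ioi.mpr (by linarith))
    (Set.mem_Ioi.mpr (by linarith)) (by linarith)
  have hv := pz_two_mul_le (hs.trans hst)
  have hv0 := pz_pos (s := 2 * t) (by linarith)
  unfold DD at *
  set x := primeZeta s
  set y := primeZeta t
  set u := primeZeta (2 * s)
  set v := primeZeta (2 * t)
  have h1 : x ^ 2 + v < 2 * x := by linarith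

  have h2 : (y ^ 2 + v) * x ≤ (x ^ 2 + v) * y := by
    have : 0 ≤ (x - y) * (x * y - v) := mul_nonneg (by linarith) (by nlinarith)
    nlinarith
  have h3 : (x ^ 2 + v) * y < 2 * x * y := mul_lt_mul_of_pos_right h1 hy
  have h4 : (y ^ 2 + v) * x < (2 * y) * x := by linarith
  have := lt_of_mul_lt_mul_right h4 hx.le
  linarith

lemma DD_int : IntegrableOn DD (Set.Ioi 1) :=
  pz_int.sub ((pz_sq_int.add pz2_int).div_const 2)

lemma cross (h₂ : ℝ) (hh₂ : 0 ≤ h₂)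
    (h0 : ∫ s in Set.Ioi (1:ℝ), DD s * Real.exp ((1 - s) * h₂) = 0) :
    ∃ s0 : ℝ, ∀ s, 1 < s → (s < s0 → DD s < 0) ∧ (s0 < s → 0 < DD s) := by
  by_cases hb : ∃ t, 1 < t ∧ 0 ≤ DD t
  · obtain ⟨t, ht, htD⟩ := hb
    let S : Set ℝ := {s | 1 < s ∧ 0 ≤ DD s}
    have hbd : BddBelow S := ⟨1, fun s hs => hs.1.le⟩
    refine ⟨sInf S, fun s hs => ⟨fun h => ?_, fun h => ?_⟩⟩
    · by_contra hc
      exact absurd (csInf_le hbd (show s ∈ S from ⟨hs, not_lt.mp hc⟩)) (not_le.mpr h)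
    · obtain ⟨r, hr, hrs⟩ := exists_lt_of_csInf_lt (⟨t, ht, htD⟩ : S.Nonempty) h
      exact DD_step hr.1 hrs hr.2
  · push Not at hb
    exfalso
    have := int_pos (F := fun s => -(DD s * Real.exp ((1 - s) * h₂))) (s0 := 0)
      (mul_exp_int DD_int hh₂).neg 
      (fun s hs _ => neg_pos.mpr (mul_neg_of_neg_of_pos (hb s hs) (Real.exp_pos _)))
    rw [integral_neg, h0] at this
    simp at this

lemma compare {s0 : ℝ} (hs0 : ∀ s, 1 < s → (s < s0 → DD s < 0) ∧ (s0 < s → 0 < DD s))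
    {a b : ℝ} (ha : 0 ≤ a) (hab : a < b) :
    ∫ s in Set.Ioi (1:ℝ), DD s * Real.exp ((1 - s) * b) 
      < Real.exp ((1 - s0) * (b - a)) * ∫ s in Set.Ioi (1:ℝ), DD s * Real.exp ((1 - s) * a) := by
  have hia := (mul_exp_int DD_int ha).const_mul (Real.exp ((1 - s0) * (b - a)))
  have hib := mul_exp_int DD_int (ha.trans hab.le)
  rw [← sub_pos, ← integral_const_mul, ← integral_sub hia hib]
  refine int_pos (s0 := s0) (hia.sub hib) ?_
  intro s hs hne
  have e : Real.exp ((1 - s) * b) = Real.exp ((1 - s) * (b - a)) * Real.exp ((1 - s) * a) := by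
    rw [← Real.exp_add]; ring_nf
  beta_reduce
  rw [e]
  have e2 : Real.exp ((1 - s0) * (b - a)) * (DD s * Real.exp ((1 - s) * a)) -
     DD s * (Real.exp ((1 - s) * (b - a)) * Real.exp ((1 - s) * a)) =
     (DD s * (Real.exp ((1 - s0) * (b - a)) - Real.exp ((1 - s) * (b - a)))) * Real.exp ((1 - s) * a) := by ring
  rw [e2]
  refine mul_pos ?_ (Real.exp_pos _)
  rcases lt_or_gt_of_ne hne with h | h
  · refine mul_pos_of_neg_of_neg ((hs0 s hs).1 h) ?_
    rw [sub_neg, Real.exp_lt_exp]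
    nlinarith
  · refine mul_pos ((hs0 s hs).2 h) ?_
    rw [sub_pos, Real.exp_lt_exp]
    nlinarith

lemma diff_eq {h : ℝ} (hh : 0 ≤ h) : transSum (almostPrimes 1) h - transSum (almostPrimes 2) h
    = ∫ s in Set.Ioi (1:ℝ), DD s * Real.exp ((1 - s) * h) := by
  have i2 : IntegrableOn (fun s => (primeZeta s ^ 2 + primeZeta (2 * s)) / 2) (Set.Ioi 1) :=
    (pz_sq_int.add pz2_int).div_const 2
  rw [transSum_eq (two_le_ap one_ne_zero) (fun s hs => hasSum_one hs) pz_int hh,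
    transSum_eq (two_le_ap two_ne_zero) (fun s hs => hasSum_two hs) i2 hh,
    ← integral_sub (mul_exp_int pz_int hh) (mul_exp_int i2 hh)]
  refine integral_congr_ae (Filter.Eventually.of_forall fun s => ?_)
  simp only [DD]
  ring

theorem stmt_1 (h₂ : ℝ)
    (hh₂ : ∀ t : ℝ,
      (0 ≤ t ∧
        (∫ s in Set.Ioi (1:ℝ),
          (primeZeta s - (primeZeta s ^ 2 + primeZeta (2 * s)) / 2) * Real.exp ((1 - s) * t)) = 0)
      ↔ t = h₂) :
    ∀ h : ℝ, 0 ≤ h →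
      (transSum (almostPrimes 1) h < transSum (almostPrimes 2) h ↔ h₂ < h) := by
  intro h hh
  obtain ⟨h20, hz⟩ := (hh₂ h₂).mpr rfl
  change ∫ s in Set.Ioi (1:ℝ), DD s * Real.exp ((1 - s) * h₂) = 0 at hz
  obtain ⟨s0, hs0⟩ := cross h₂ h20 hz
  rw [← sub_neg, diff_eq hh]
  rcases lt_trichotomy h₂ h with hlt | rfl | hgt
  · have := compare hs0 h20 hlt
    rw [hz, mul_zero] at this
    simp [this, hlt]
  · simp [hz]
  · have := compare hs0 hh hgt
    rw [hz] at this
    have h3 := (mul_pos_iff_of_pos_left (Real.exp_pos _)).mp this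
    exact ⟨fun h4 => absurd h4 (not_lt.mpr h3.le), fun h4 => absurd h4 (not_lt.mpr hgt.le)⟩
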